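/- Let α ∈ ℝ, β < 0, σ > 0, and let G be the Vasicek Green's function. For every fixed s > 0 and ξ ∈ ℝ, the function (t,x) ↦ G(t,s;x,ξ) satisfies the backward Kolmogorov equation ∂ₜG(t,s;x,ξ) + (α + βx)·∂ₓG(t,s;x,ξ) + (σ²/2)·∂²ₓₓG(t,s;x,ξ) − x·G(t,s;x,ξ) = 0 for all t < s and all x ∈ ℝ. -/

import Mathlib

/-- Squared width `Σ(t,s)²` of the Vasicek Green's function. -/
noncomputable def vasicekSigmaSq (β σ t s : ℝ) : ℝ :=
  -(σ ^ 2 / (2 * β)) * (1 - Real.exp (2 * β * (s - t)))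

/-- Mean `μ(t,s;x)` of the Vasicek Green's function. -/
noncomputable def vasicekMu (α β σ t s x : ℝ) : ℝ :=
  x * Real.exp (β * (s - t)) - (α / β) * (1 - Real.exp (β * (s - t))) +
    (σ ^ 2 / (2 * β ^ 2)) *
      (Real.exp (-(β * (s - t))) + Real.exp (β * (s - t)) - 2)

/-- Factor `C₁(t,s;ξ)` of the Vasicek Green's function. -/
noncomputable def vasicekC1 (α β σ t s ξ : ℝ) : ℝ :=
  Real.exp (-((σ ^ 2 * Real.exp (-(2 * β * (s - t)))
      - 4 * ξ * β ^ 2 * Real.exp (-(β * (s - t)))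
      - 4 * σ ^ 2 * Real.exp (-(β * (s - t)))
      - 4 * α * β * Real.exp (-(β * (s - t)))) / (4 * β ^ 3)))

/-- Factor `C₂(t,s;ξ)` of the Vasicek Green's function. -/
noncomputable def vasicekC2 (α β σ t s ξ : ℝ) : ℝ :=
  Real.exp ((σ ^ 2 / (2 * β ^ 2) + α / β) * (s - t)
    - 3 * σ ^ 2 / (4 * β ^ 3) - ξ / β - α / β ^ 2)

/-- The Vasicek Green's function
`G(t,s;x,ξ) = C₁C₂/(√(2π)Σ) · exp(−(ξ−μ)²/(2Σ²))`. -/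
noncomputable def vasicekG (α β σ t s x ξ : ℝ) : ℝ :=
  vasicekC1 α β σ t s ξ * vasicekC2 α β σ t s ξ /
    (Real.sqrt (2 * Real.pi) * Real.sqrt (vasicekSigmaSq β σ t s)) *
    Real.exp (-((ξ - vasicekMu α β σ t s x) ^ 2 / (2 * vasicekSigmaSq β σ t s)))

/-!
Write `G = exp c · N(ξ; μ, Σ²)`, where `N` is the normal density and `c = log (C₁ C₂)`. Dividing the
equation by `G` turns it into a polynomial in `(ξ - μ) / Σ²`, and the equation holds because the
mean, the variance and the weight satisfy
`∂ₜΣ² = -σ² (∂ₓμ)²`, `∂ₜμ + (α + βx) ∂ₓμ = -Σ² / ∂ₓμ` and `∂ₜc = x + (ξ - μ) / ∂ₓμ`,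
with `∂ₓμ = exp (β (s - t))`.
-/

section WeightedGaussian

/-- The normal density with mean `m` and variance `v` at `ξ`, multiplied by the weight `exp c`.
The variance is a real number, unlike in `ProbabilityTheory.gaussianPDFReal`, so that it can be
differentiated; only `0 < v` is meaningful. -/
noncomputable def weightedGaussian (c v m ξ : ℝ) : ℝ :=
  Real.exp c / (√(2 * Real.pi) * √v) * Real.exp (-((ξ - m) ^ 2 / (2 * v)))

theorem hasDerivAt_weightedGaussian {c v m : ℝ → ℝ} {c' v' m' t : ℝ} (hc : HasDerivAt c c' t)
    (hv : HasDerivAt v v' t) (hm : HasDerivAt m m' t) (hpos : 0 < v t) (ξ : ℝ) :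
    HasDerivAt (fun r => weightedGaussian (c r) (v r) (m r) ξ)
      (weightedGaussian (c t) (v t) (m t) ξ *
        (c' - v' / (2 * v t) + (ξ - m t) * m' / v t + (ξ - m t) ^ 2 * v' / (2 * v t ^ 2))) t := by
  have hsqrt : √(v t) ≠ 0 := (Real.sqrt_pos.mpr hpos).ne'
  have hpi : √(2 * Real.pi) ≠ 0 := by positivity
  have hfactor : HasDerivAt (fun r => Real.exp (c r) / (√(2 * Real.pi) * √(v r)))
      (Real.exp (c t) / (√(2 * Real.pi) * √(v t)) * (c' - v' / (2 * v t))) t := by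
    have hlog : v' / (2 * v t) = v' / (2 * √(v t)) / √(v t) := by
      rw [div_div, mul_assoc, Real.mul_self_sqrt hpos.le]
    refine (hc.exp.fun_div ((hv.sqrt hpos.ne').const_mul _) (mul_ne_zero hpi hsqrt)).congr_deriv ?_
    rw [hlog]
    field_simp
  have hexponent : HasDerivAt (fun r => -((ξ - m r) ^ 2 / (2 * v r)))
      ((ξ - m t) * m' / v t + (ξ - m t) ^ 2 * v' / (2 * v t ^ 2)) t := by
    refine (((hm.const_sub ξ).fun_pow 2).fun_div (hv.const_mul 2) (by positivity)).fun_neg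
      |>.congr_deriv ?_
    field_simp
    ring
  refine (hfactor.fun_mul hexponent.exp).congr_deriv ?_
  rw [weightedGaussian]
  ring

theorem hasDerivAt_weightedGaussian_mean {m : ℝ → ℝ} {m' x : ℝ} (hm : HasDerivAt m m' x)
    (c v ξ : ℝ) :
    HasDerivAt (fun y => weightedGaussian c v (m y) ξ)
      (weightedGaussian c v (m x) ξ * ((ξ - m x) * m' / v)) x := by
  refine ((((hm.const_sub ξ).fun_pow 2).div_const (2 * v)).fun_neg.exp.const_mul _).congr_deriv ?_
  rw [weightedGaussian]
  ring

theorem deriv_deriv_weightedGaussian_mean {m : ℝ → ℝ} {a : ℝ} (hm : ∀ y, HasDerivAt m a y)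
    (c v ξ x : ℝ) :
    deriv (deriv fun y => weightedGaussian c v (m y) ξ) x =
      weightedGaussian c v (m x) ξ * (((ξ - m x) * a / v) ^ 2 - a ^ 2 / v) := by
  have hfirst : (deriv fun y => weightedGaussian c v (m y) ξ) =
      fun y => weightedGaussian c v (m y) ξ * ((ξ - m y) * a / v) :=
    funext fun y => (hasDerivAt_weightedGaussian_mean (hm y) c v ξ).deriv
  have hscore : HasDerivAt (fun y => (ξ - m y) * a / v) (-a * a / v) x :=
    (((hm x).const_sub ξ).mul_const a).div_const v
  rw [hfirst, ((hasDerivAt_weightedGaussian_mean (hm x) c v ξ).fun_mul hscore).deriv]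
  ring

/-- With `v' = -σ² a²` the variance terms of the time derivative cancel the diffusion term; what
remains of the equation is `hbalance`. -/
theorem weightedGaussian_backward_kolmogorov {c v : ℝ → ℝ} {m : ℝ → ℝ → ℝ}
    {c' m' a b σ k ξ t x : ℝ} (hc : HasDerivAt c c' t)
    (hv : HasDerivAt v (-(σ ^ 2 * a ^ 2)) t) (hmt : HasDerivAt (fun r => m r x) m' t)
    (hmx : ∀ y, HasDerivAt (m t) a y) (hpos : 0 < v t)
    (hbalance : (ξ - m t x) * (m' + b * a) = v t * (k - c')) :
    deriv (fun r => weightedGaussian (c r) (v r) (m r x) ξ) t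
      + b * deriv (fun y => weightedGaussian (c t) (v t) (m t y) ξ) x
      + σ ^ 2 / 2 * deriv (deriv fun y => weightedGaussian (c t) (v t) (m t y) ξ) x
      - k * weightedGaussian (c t) (v t) (m t x) ξ = 0 := by
  rw [(hasDerivAt_weightedGaussian hc hv hmt hpos ξ).deriv,
    (hasDerivAt_weightedGaussian_mean (hmx x) (c t) (v t) ξ).deriv,
    deriv_deriv_weightedGaussian_mean hmx]
  have hv_ne : v t ≠ 0 := hpos.ne'
  have hquot : (ξ - m t x) * (m' + b * a) / v t = k - c' := by
    rw [hbalance, mul_div_cancel_left₀ _ hv_ne]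
  linear_combination weightedGaussian (c t) (v t) (m t x) ξ * hquot

end WeightedGaussian

section Vasicek

theorem hasDerivAt_exp_mul_const_sub (k s t : ℝ) :
    HasDerivAt (fun r => Real.exp (k * (s - r))) (-k * Real.exp (k * (s - t))) t :=
  (((hasDerivAt_id' t).const_sub s).const_mul k).exp.congr_deriv (by ring)

theorem vasicekSigmaSq_pos {β σ t s : ℝ} (hβ : β ≠ 0) (hσ : σ ≠ 0) (hts : t < s) :
    0 < vasicekSigmaSq β σ t s := by
  have hquot : 0 < (Real.exp (2 * β * (s - t)) - 1) / (2 * β) := by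
    rcases hβ.lt_or_gt with hneg | hpos
    · have hexp : Real.exp (2 * β * (s - t)) < 1 :=
        Real.exp_lt_one_iff.mpr (mul_neg_of_neg_of_pos (by linarith) (sub_pos.mpr hts))
      exact div_pos_of_neg_of_neg (by linarith) (by linarith)
    · have hexp : 1 < Real.exp (2 * β * (s - t)) :=
        Real.one_lt_exp_iff.mpr (mul_pos (by linarith) (sub_pos.mpr hts))
      exact div_pos (by linarith) (by linarith)
  calc 0 < σ ^ 2 * ((Real.exp (2 * β * (s - t)) - 1) / (2 * β)) := by positivity
    _ = vasicekSigmaSq β σ t s := by rw [vasicekSigmaSq]; ring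

theorem hasDerivAt_vasicekSigmaSq {β : ℝ} (hβ : β ≠ 0) (σ t s : ℝ) :
    HasDerivAt (fun r => vasicekSigmaSq β σ r s) (-(σ ^ 2 * Real.exp (β * (s - t)) ^ 2)) t := by
  refine (((hasDerivAt_exp_mul_const_sub (2 * β) s t).const_sub 1).const_mul
    (-(σ ^ 2 / (2 * β)))).congr_deriv ?_
  rw [← Real.exp_nat_mul, Nat.cast_ofNat, ← mul_assoc]
  field_simp

theorem hasDerivAt_vasicekMu_space (α β σ t s x : ℝ) :
    HasDerivAt (vasicekMu α β σ t s) (Real.exp (β * (s - t))) x :=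
  (((hasDerivAt_id' x).mul_const _).sub_const _).add_const _ |>.congr_deriv (one_mul _)

theorem hasDerivAt_vasicekMu_time {β : ℝ} (hβ : β ≠ 0) (α σ t s x : ℝ) :
    HasDerivAt (fun r => vasicekMu α β σ r s x)
      (-(α + β * x) * Real.exp (β * (s - t))
        - vasicekSigmaSq β σ t s * Real.exp (-β * (s - t))) t := by
  have hgrow := hasDerivAt_exp_mul_const_sub β s t
  have hdecay := hasDerivAt_exp_mul_const_sub (-β) s t
  have hexp : Real.exp (2 * β * (s - t)) * Real.exp (-β * (s - t)) = Real.exp (β * (s - t)) := by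
    rw [← Real.exp_add]
    ring_nf
  simp only [vasicekMu, ← neg_mul]
  refine (((hgrow.const_mul x).fun_sub ((hgrow.const_sub 1).const_mul (α / β))).fun_add
    (((hdecay.fun_add hgrow).sub_const 2).const_mul (σ ^ 2 / (2 * β ^ 2)))).congr_deriv ?_
  rw [vasicekSigmaSq]
  generalize Real.exp (-β * (s - t)) = D, Real.exp (2 * β * (s - t)) = E₂ at hexp ⊢
  field_simp
  linear_combination σ ^ 2 * hexp

/-- The logarithm `log (C₁ C₂)` of the weight of the Vasicek Green's function, with the
exponentials collected. -/
noncomputable def vasicekLogWeight (α β σ t s ξ : ℝ) : ℝ :=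
  (σ ^ 2 / (2 * β ^ 2) + α / β) * (s - t)
    + (ξ / β + α / β ^ 2 + σ ^ 2 / β ^ 3) * (Real.exp (-β * (s - t)) - 1)
    - σ ^ 2 / (4 * β ^ 3) * (Real.exp (-(2 * β) * (s - t)) - 1)

theorem hasDerivAt_vasicekLogWeight {β : ℝ} (hβ : β ≠ 0) (α σ t s ξ x : ℝ) :
    HasDerivAt (fun r => vasicekLogWeight α β σ r s ξ)
      (x + (ξ - vasicekMu α β σ t s x) * Real.exp (-β * (s - t))) t := by
  have hsingle := hasDerivAt_exp_mul_const_sub (-β) s t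
  have hdouble := hasDerivAt_exp_mul_const_sub (-(2 * β)) s t
  have hexp : Real.exp (β * (s - t)) * Real.exp (-β * (s - t)) = 1 := by
    rw [neg_mul, Real.exp_neg, mul_inv_cancel₀ (Real.exp_ne_zero _)]
  have hexp_sq : Real.exp (-(2 * β) * (s - t)) = Real.exp (-β * (s - t)) ^ 2 := by
    rw [← Real.exp_nat_mul, Nat.cast_ofNat, ← mul_assoc, mul_neg]
  refine (((((hasDerivAt_id' t).const_sub s).const_mul (σ ^ 2 / (2 * β ^ 2) + α / β)).fun_add
    ((hsingle.sub_const 1).const_mul (ξ / β + α / β ^ 2 + σ ^ 2 / β ^ 3))).fun_sub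
    ((hdouble.sub_const 1).const_mul (σ ^ 2 / (4 * β ^ 3)))).congr_deriv ?_
  rw [hexp_sq, vasicekMu, ← neg_mul β]
  generalize Real.exp (-β * (s - t)) = D at hexp ⊢
  field_simp
  linear_combination (8 * β ^ 2 * x + 8 * α * β + 4 * σ ^ 2) * hexp

theorem vasicekG_eq_weightedGaussian {β : ℝ} (hβ : β ≠ 0) (α σ t s x ξ : ℝ) :
    vasicekG α β σ t s x ξ =
      weightedGaussian (vasicekLogWeight α β σ t s ξ) (vasicekSigmaSq β σ t s)
        (vasicekMu α β σ t s x) ξ := by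
  have hweight : vasicekC1 α β σ t s ξ * vasicekC2 α β σ t s ξ =
      Real.exp (vasicekLogWeight α β σ t s ξ) := by
    rw [vasicekC1, vasicekC2, ← Real.exp_add, vasicekLogWeight, neg_mul, neg_mul]
    congr 1
    field_simp
    ring
  rw [vasicekG, hweight, weightedGaussian]

theorem vasicek_green_backward_kolmogorov_general {α β σ s t : ℝ} (hβ : β ≠ 0) (hσ : σ ≠ 0)
    (hts : t < s) (ξ x : ℝ) :
    deriv (fun r => vasicekG α β σ r s x ξ) t
      + (α + β * x) * deriv (fun y => vasicekG α β σ t s y ξ) x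
      + σ ^ 2 / 2 * deriv (deriv (fun y => vasicekG α β σ t s y ξ)) x
      - x * vasicekG α β σ t s x ξ = 0 := by
  simp only [vasicekG_eq_weightedGaussian hβ]
  refine weightedGaussian_backward_kolmogorov (m := fun r y => vasicekMu α β σ r s y)
    (hasDerivAt_vasicekLogWeight hβ α σ t s ξ x) (hasDerivAt_vasicekSigmaSq hβ σ t s)
    (hasDerivAt_vasicekMu_time hβ α σ t s x) (hasDerivAt_vasicekMu_space α β σ t s)
    (vasicekSigmaSq_pos hβ hσ hts) ?_
  ring

end Vasicek

/-- For fixed `s > 0` and `ξ`, the Vasicek Green's function `(t,x) ↦ G(t,s;x,ξ)`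
satisfies the backward Kolmogorov equation
`∂ₜG + (α + βx)∂ₓG + (σ²/2)∂²ₓₓG − xG = 0` for all `t < s` and `x ∈ ℝ`. -/
theorem vasicek_green_backward_kolmogorov
    (α β σ : ℝ) (hβ : β < 0) (hσ : 0 < σ) :
    ∀ s : ℝ, 0 < s → ∀ ξ : ℝ, ∀ t : ℝ, t < s → ∀ x : ℝ,
      deriv (fun r => vasicekG α β σ r s x ξ) t
        + (α + β * x) * deriv (fun y => vasicekG α β σ t s y ξ) x
        + σ ^ 2 / 2 * deriv (deriv (fun y => vasicekG α β σ t s y ξ)) x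
        - x * vasicekG α β σ t s x ξ = 0 := by
  intro s _ ξ t hts x
  exact vasicek_green_backward_kolmogorov_general hβ.ne hσ.ne' hts ξ x
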